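/- For every integer l with 1 ≤ l ≤ d = (p−1)(q−1)/2 there exists a tuple α ∈ K^I such that the curve C_α of type p,q is a nodal curve with exactly l nodes, i.e., C_α has exactly l singular points and every singular point of C_α is a node. -/

import Mathlib

open MvPolynomial

/-- The index set `I` of pairs `(ν,μ)` of nonnegative integers with `νp + μq < pq`
(for `p, q ≥ 1` the conditions `ν < q`, `μ < p` are automatic). -/
def idxSet (p q : ℕ) : Finset (ℕ × ℕ) :=
  (Finset.range q ×ˢ Finset.range p).filter fun t => t.1 * p + t.2 * q < p * q

/-- The normed Weierstraß polynomial `F_α = Y^p − X^q + Σ a_{νμ} X^ν Y^μ`,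
as a polynomial in two variables `X 0 = X`, `X 1 = Y`. -/
noncomputable def wPoly (K : Type) [CommRing K] (p q : ℕ) (a : idxSet p q → K) :
    MvPolynomial (Fin 2) K :=
  X 1 ^ p - X 0 ^ q + ∑ i : idxSet p q, C (a i) * X 0 ^ (i : ℕ × ℕ).1 * X 1 ^ (i : ℕ × ℕ).2

/-- The Hessian determinant `G_{XX} G_{YY} − G_{XY}²` of a polynomial in `X, Y`. -/
noncomputable def hessPoly (K : Type) [CommRing K] (G : MvPolynomial (Fin 2) K) :
    MvPolynomial (Fin 2) K :=
  pderiv 0 (pderiv 0 G) * pderiv 1 (pderiv 1 G) - (pderiv 0 (pderiv 1 G)) ^ 2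

/-- `P` is a singular point of the curve `G = 0`. -/
def IsSingAt (K : Type) [CommRing K] (G : MvPolynomial (Fin 2) K) (P : K × K) : Prop :=
  eval ![P.1, P.2] G = 0 ∧ eval ![P.1, P.2] (pderiv 0 G) = 0 ∧ eval ![P.1, P.2] (pderiv 1 G) = 0

/-- `P` is a node of the curve `G = 0`. -/
def IsNodeAt (K : Type) [CommRing K] (G : MvPolynomial (Fin 2) K) (P : K × K) : Prop :=
  IsSingAt K G P ∧ eval ![P.1, P.2] (hessPoly K G) ≠ 0

theorem eval_pderiv_zero_wPoly {K : Type} [CommRing K] {p q : ℕ} (a : idxSet p q → K) (x y : K) :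
    eval ![x, y] (pderiv 0 (wPoly K p q a)) = -(q * x ^ (q - 1)) +
      ∑ i : idxSet p q, a i * ((i : ℕ × ℕ).1 * x ^ ((i : ℕ × ℕ).1 - 1)) * y ^ (i : ℕ × ℕ).2 := by
  simp [wPoly, pderiv_X, Derivation.leibniz_pow]
  exact Finset.sum_congr rfl fun i _ => by ring

theorem eval_pderiv_one_wPoly {K : Type} [CommRing K] {p q : ℕ} (a : idxSet p q → K) (x y : K) :
    eval ![x, y] (pderiv 1 (wPoly K p q a)) = p * y ^ (p - 1) +
      ∑ i : idxSet p q, a i * x ^ (i : ℕ × ℕ).1 * ((i : ℕ × ℕ).2 * y ^ ((i : ℕ × ℕ).2 - 1)) := by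
  simp [wPoly, pderiv_X, Derivation.leibniz_pow]

/-- The restrictions of polynomials to a finite set of points of the plane are all functions. -/
theorem eval_pair_surjective {K : Type} [Field K] (T : Finset (K × K)) (w : T → K) :
    ∃ G : MvPolynomial (Fin 2) K, ∀ P : T, eval ![P.1.1, P.1.2] G = w P := by
  classical
  have sep : ∀ P Q : K × K, P ≠ Q → ∃ G : MvPolynomial (Fin 2) K,
      eval ![P.1, P.2] G = 1 ∧ eval ![Q.1, Q.2] G = 0 := by
    intro P Q h
    by_cases h1 : P.1 = Q.1
    · have h2 : P.2 - Q.2 ≠ 0 := sub_ne_zero.2 fun h2 => h (Prod.ext h1 h2)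
      exact ⟨C (P.2 - Q.2)⁻¹ * (X 1 - C Q.2), by simp [h2], by simp⟩
    · have h2 : P.1 - Q.1 ≠ 0 := sub_ne_zero.2 h1
      exact ⟨C (P.1 - Q.1)⁻¹ * (X 0 - C Q.1), by simp [h2], by simp⟩
  choose! G hG1 hG0 using sep
  refine ⟨∑ P : T, C (w P) * ∏ Q ∈ T.erase P.1, G P.1 Q, fun P => ?_⟩
  rw [map_sum, Finset.sum_eq_single P]
  · rw [map_mul, eval_C, map_prod, Finset.prod_eq_one, mul_one]
    intro Q hQ
    exact hG1 _ _ (Finset.ne_of_mem_erase hQ).symm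
  · intro R _ hR
    have hne : P.1 ≠ R.1 := fun h => hR (Subtype.ext h.symm)
    rw [map_mul, map_prod, Finset.prod_eq_zero (Finset.mem_erase.2 ⟨hne, P.2⟩), mul_zero]
    exact hG0 _ _ hne.symm
  · simp

theorem card_critical_le {K : Type} [Field K] [CharZero K] {p q : ℕ} (hp : 1 < p) (hq : 1 < q)
    (a : idxSet p q → K) (T : Finset (K × K))
    (h0 : ∀ P ∈ T, eval ![P.1, P.2] (pderiv 0 (wPoly K p q a)) = 0)
    (h1 : ∀ P ∈ T, eval ![P.1, P.2] (pderiv 1 (wPoly K p q a)) = 0) :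
    T.card ≤ (q - 1) * (p - 1) := by
  classical
  have hq0 : (q : K) ≠ 0 := by exact_mod_cast (by omega : q ≠ 0)
  have hp0 : (p : K) ≠ 0 := by exact_mod_cast (by omega : p ≠ 0)
  let m : ℕ → ℕ → T → K := fun i j P => P.1.1 ^ i * P.1.2 ^ j
  let W : Submodule K (T → K) := Submodule.span K
    (Set.range fun s : Fin (q - 1) × Fin (p - 1) => m s.1 s.2)
  have mem_idx : ∀ i : idxSet p q, (i : ℕ × ℕ).1 * p + (i : ℕ × ℕ).2 * q < p * q :=
    fun i => (Finset.mem_filter.1 i.2).2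
  have hm : ∀ N i j : ℕ, i * p + j * q = N → m i j ∈ W := by
    intro N
    induction N using Nat.strong_induction_on with
    | _ N ih =>
      intro i j hN
      by_cases hi : i < q - 1
      · by_cases hj : j < p - 1
        · exact Submodule.subset_span ⟨(⟨i, hi⟩, ⟨j, hj⟩), rfl⟩
        · obtain ⟨r, rfl⟩ := Nat.exists_eq_add_of_le (not_lt.1 hj)
          have key : m i (p - 1 + r) = ∑ s : idxSet p q,
              (-(p : K)⁻¹ * a s * (s : ℕ × ℕ).2) •
                m (i + (s : ℕ × ℕ).1) (r + ((s : ℕ × ℕ).2 - 1)) := by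
            funext P
            have h := h1 P.1 P.2
            rw [eval_pderiv_one_wPoly] at h
            have h' : P.1.2 ^ (p - 1) = -(p : K)⁻¹ * ∑ s : idxSet p q,
                a s * P.1.1 ^ (s : ℕ × ℕ).1 *
                  ((s : ℕ × ℕ).2 * P.1.2 ^ ((s : ℕ × ℕ).2 - 1)) := by
              rw [neg_mul, ← mul_neg, ← eq_neg_of_add_eq_zero_left h, inv_mul_cancel_left₀ hp0]
            simp only [m, pow_add, h', Finset.sum_apply, Pi.smul_apply, smul_eq_mul,
              Finset.mul_sum, Finset.sum_mul]
            exact Finset.sum_congr rfl fun s _ => by ring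
          rw [key]
          refine Submodule.sum_mem _ fun s _ => ?_
          rcases Nat.eq_zero_or_pos (s : ℕ × ℕ).2 with hs | hs
          · simp [hs]
          · refine W.smul_mem _ (ih _ ?_ _ _ rfl)
            rw [← hN]
            have := mem_idx s
            obtain ⟨t, ht⟩ := Nat.exists_eq_add_of_le' hs
            obtain ⟨p', rfl⟩ := Nat.exists_eq_add_of_lt hp
            rw [ht] at this ⊢
            simp only [Nat.add_sub_cancel, Nat.succ_eq_add_one] at this ⊢
            nlinarith
      · obtain ⟨r, rfl⟩ := Nat.exists_eq_add_of_le (not_lt.1 hi)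
        have key : m (q - 1 + r) j = ∑ s : idxSet p q,
            ((q : K)⁻¹ * a s * (s : ℕ × ℕ).1) •
              m (r + ((s : ℕ × ℕ).1 - 1)) (j + (s : ℕ × ℕ).2) := by
          funext P
          have h := h0 P.1 P.2
          rw [eval_pderiv_zero_wPoly] at h
          have h' : P.1.1 ^ (q - 1) = (q : K)⁻¹ * ∑ s : idxSet p q,
              a s * ((s : ℕ × ℕ).1 * P.1.1 ^ ((s : ℕ × ℕ).1 - 1)) *
                P.1.2 ^ (s : ℕ × ℕ).2 := by
            rw [← neg_add_eq_zero.1 h, inv_mul_cancel_left₀ hq0]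
          simp only [m, pow_add, h', Finset.sum_apply, Pi.smul_apply, smul_eq_mul,
            Finset.mul_sum, Finset.sum_mul]
          exact Finset.sum_congr rfl fun s _ => by ring
        rw [key]
        refine Submodule.sum_mem _ fun s _ => ?_
        rcases Nat.eq_zero_or_pos (s : ℕ × ℕ).1 with hs | hs
        · simp [hs]
        · refine W.smul_mem _ (ih _ ?_ _ _ rfl)
          rw [← hN]
          have := mem_idx s
          obtain ⟨t, ht⟩ := Nat.exists_eq_add_of_le' hs
          obtain ⟨q', rfl⟩ := Nat.exists_eq_add_of_lt hq
          rw [ht] at this ⊢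
          simp only [Nat.add_sub_cancel, Nat.succ_eq_add_one] at this ⊢
          nlinarith
  have htop : W = ⊤ := by
    refine eq_top_iff.2 fun w _ => ?_
    obtain ⟨G, hG⟩ := eval_pair_surjective T w
    have : w = ∑ s ∈ G.support, G.coeff s • m (s 0) (s 1) := by
      funext P
      rw [← hG P, eval_eq']
      simp [m, Fin.prod_univ_two]
    rw [this]
    exact Submodule.sum_mem _ fun s _ => W.smul_mem _ (hm _ _ _ rfl)
  have hr : Module.finrank K W ≤ _ := finrank_range_le_card (R := K)
    fun s : Fin (q - 1) × Fin (p - 1) => m s.1 s.2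
  rw [htop, finrank_top, Module.finrank_fintype_fun_eq_card] at hr
  simpa using hr

/-- A finitely generated `ℚ`-algebra has a point over every algebraically closed field of
characteristic zero. -/
theorem exists_algHom_of_finiteType_rat (A : Type) [CommRing A] [Nontrivial A] [Algebra ℚ A]
    [Algebra.FiniteType ℚ A] (K : Type) [Field K] [IsAlgClosed K] [CharZero K] :
    Nonempty (A →ₐ[ℚ] K) := by
  obtain ⟨m, hm⟩ := Ideal.exists_maximal A
  let _ : Field (A ⧸ m) := Ideal.Quotient.field m
  have : Module.Finite ℚ (A ⧸ m) := finite_of_finite_type_of_isJacobsonRing ℚ (A ⧸ m)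
  exact ⟨(IsAlgClosed.lift : (A ⧸ m) →ₐ[ℚ] K).comp (Ideal.Quotient.mkₐ ℚ m)⟩

theorem map_wPoly {R S : Type} [CommRing R] [CommRing S] (f : R →+* S) {p q : ℕ}
    (a : idxSet p q → R) : map f (wPoly R p q a) = wPoly S p q fun i => f (a i) := by
  simp [wPoly]

theorem eval_pair_map {R S : Type} [CommRing R] [CommRing S] (f : R →+* S) (x y : R)
    (G : MvPolynomial (Fin 2) R) : eval ![f x, f y] (map f G) = f (eval ![x, y] G) := by
  have h : ![f x, f y] = f ∘ ![x, y] := by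
    funext i
    fin_cases i <;> rfl
  rw [h, eval_map, ← eval₂_comp]

theorem map_hessPoly {R S : Type} [CommRing R] [CommRing S] (f : R →+* S)
    (G : MvPolynomial (Fin 2) R) : map f (hessPoly R G) = hessPoly S (map f G) := by
  simp [hessPoly, pderiv_map]

/-- The monic Chebyshev polynomial `2 T_n(X/2)`: its critical points are real and nondegenerate,
its critical values alternate between `2` and `-2`, and the polynomials `U_i(X/2)` have a
reflection symmetry on the critical points. -/
theorem exists_monic_chebyshev {n : ℕ} (hn : 1 < n) :
    ∃ (f : Polynomial ℝ) (x : Fin (n - 1) → ℝ) (u : Polynomial.Sequence ℝ),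
      f.Monic ∧ f.natDegree = n ∧ Function.Injective x ∧
      (∀ k, f.derivative.eval (x k) = 0) ∧
      (∀ k, f.derivative.derivative.eval (x k) ≠ 0) ∧
      (∀ k, f.eval (x k) = -2 * (-1) ^ (k : ℕ)) ∧
      ∀ i j : ℕ, i + j + 2 = n → ∀ k,
        (u i).eval (x k) = (-1) ^ (k : ℕ) * (u j).eval (x k) := by
  open Polynomial Polynomial.Chebyshev Real in
  have hn0 : (n : ℝ) ≠ 0 := by exact_mod_cast (by omega : n ≠ 0)
  let h : Polynomial ℝ := Polynomial.C (1 / 2) * Polynomial.X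
  have hdeg : h.natDegree = 1 := natDegree_C_mul_X _ (by norm_num)
  have hd : derivative h = Polynomial.C (1 / 2) := by simp [h]
  let θ : Fin (n - 1) → ℝ := fun k => ((k : ℕ) + 1 : ℝ) * π / n
  have hθ0 : ∀ k, 0 < θ k := fun k => by positivity
  have hθπ : ∀ k, θ k < π := fun k => by
    have hk : ((k : ℕ) + 1 : ℝ) < n := by exact_mod_cast (by omega : (k : ℕ) + 1 < n)
    rw [div_lt_iff₀ (by positivity), mul_comm π]
    exact mul_lt_mul_of_pos_right hk pi_pos
  have hsin : ∀ k, sin (θ k) ≠ 0 := fun k => (sin_pos_of_pos_of_lt_pi (hθ0 k) (hθπ k)).ne'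
  have hnθ : ∀ k, (n : ℝ) * θ k = (((k : ℕ) + 1 : ℕ) : ℝ) * π := fun k => by
    simp only [θ]
    push_cast
    field_simp
  have hev : ∀ k, h.eval (2 * cos (θ k)) = cos (θ k) := fun k => by simp [h]
  have hU : ∀ k, (U ℝ ((n : ℤ) - 1)).eval (cos (θ k)) = 0 := fun k => by
    have := U_real_cos (θ k) ((n : ℤ) - 1)
    push_cast at this
    rw [sub_add_cancel, hnθ, sin_nat_mul_pi] at this
    exact (mul_eq_zero.1 this).resolve_right (hsin k)
  have hT : ∀ k, (T ℝ (n : ℤ)).eval (cos (θ k)) = -(-1) ^ (k : ℕ) := fun k => by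
    rw [T_real_cos, Int.cast_natCast, hnθ, cos_nat_mul_pi, pow_succ, mul_neg_one]
  have hf1 : derivative (2 * (T ℝ (n : ℤ)).comp h) = (derivative (T ℝ (n : ℤ))).comp h := by
    rw [derivative_mul, derivative_comp, hd]
    have : (2 : Polynomial ℝ) = Polynomial.C 2 := rfl
    rw [this, derivative_C, zero_mul, zero_add, ← mul_assoc, ← Polynomial.C_mul]
    norm_num
  refine ⟨2 * (T ℝ (n : ℤ)).comp h, fun k => 2 * cos (θ k),
    ⟨fun i => (U ℝ (i : ℤ)).comp h, fun i => ?_⟩, ?_, ?_, ?_, ?_, ?_, ?_, ?_⟩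
  · rw [degree_eq_natDegree, natDegree_comp, hdeg, natDegree_U_natCast, mul_one]
    rw [← leadingCoeff_ne_zero, leadingCoeff_comp (by omega), leadingCoeff_U_natCast,
      leadingCoeff_C_mul_X]
    positivity
  · have h2 : (2 : Polynomial ℝ) = Polynomial.C 2 := rfl
    rw [Monic, leadingCoeff_mul, leadingCoeff_comp (by omega), leadingCoeff_T, h2, leadingCoeff_C,
      natDegree_T, leadingCoeff_C_mul_X]
    obtain ⟨m, rfl⟩ := Nat.exists_eq_add_of_lt hn
    rw [Int.natAbs_natCast, Nat.add_sub_cancel, one_div, inv_pow, pow_succ]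
    field_simp
  · have h2 : (2 : Polynomial ℝ) = Polynomial.C 2 := rfl
    rw [h2, natDegree_C_mul two_ne_zero, natDegree_comp, hdeg, natDegree_T]
    simp
  · intro j k hjk
    have := injOn_cos ⟨(hθ0 j).le, (hθπ j).le⟩ ⟨(hθ0 k).le, (hθπ k).le⟩
      (mul_left_cancel₀ two_ne_zero hjk)
    have h2 := hnθ j
    rw [this, hnθ k] at h2
    have h3 := mul_right_cancel₀ pi_ne_zero h2
    have h4 : (k : ℕ) + 1 = j + 1 := by exact_mod_cast h3
    exact Fin.ext (by omega)
  · intro k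
    rw [hf1, eval_comp, hev, T_derivative_eq_U]
    simp [hU]
  · intro k
    have h2 := congrArg (Polynomial.eval (cos (θ k)))
      (one_sub_X_sq_mul_derivative_derivative_T_eq_poly_in_T (R := ℝ) (n : ℤ))
    intro h3
    rw [hf1, derivative_comp, hd, Polynomial.eval_mul, eval_comp, hev, Polynomial.eval_C] at h3
    rw [Function.iterate_succ, Function.iterate_one, Function.comp_apply] at h2
    have h4 := (mul_eq_zero.1 h3).resolve_left (by norm_num)
    rw [Polynomial.eval_mul, h4, T_derivative_eq_U] at h2
    simp [hU, hT, hn0] at h2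
  · intro k
    simp [eval_comp, hev, hT]
  · intro i j hij k
    have key : ∀ i : ℕ, (U ℝ (i : ℤ)).eval (cos (θ k)) = sin (((i : ℝ) + 1) * θ k) / sin (θ k) :=
      fun i => by rw [eq_div_iff (hsin k), U_real_cos, Int.cast_natCast]
    change ((U ℝ (i : ℤ)).comp h).eval _ = _ * ((U ℝ (j : ℤ)).comp h).eval _
    have : ((i : ℝ) + 1) * θ k = (((k : ℕ) + 1 : ℕ) : ℝ) * π - ((j : ℝ) + 1) * θ k := by
      rw [← hnθ, ← hij]
      push_cast
      ring
    rw [eval_comp, eval_comp, hev, key, key, this, sin_nat_mul_pi_sub, pow_succ]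
    ring

/-- The monomials indexed by `idxSet p q` interpolate arbitrary values on the points of even parity
of a grid whose coordinates carry the Chebyshev reflection symmetry. -/
theorem exists_interpolation {p q : ℕ} (hp : 1 < p) (hq : 1 < q) (hco : Nat.Coprime p q)
    {x : Fin (q - 1) → ℝ} {y : Fin (p - 1) → ℝ}
    (hx : Function.Injective x) (hy : Function.Injective y) (u v : Polynomial.Sequence ℝ)
    (hu : ∀ i j : ℕ, i + j + 2 = q → ∀ k,
      (u i).eval (x k) = (-1) ^ (k : ℕ) * (u j).eval (x k))
    (hv : ∀ i j : ℕ, i + j + 2 = p → ∀ k,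
      (v i).eval (y k) = (-1) ^ (k : ℕ) * (v j).eval (y k))
    (w : Fin (q - 1) × Fin (p - 1) → ℝ) :
    ∃ h : idxSet p q → ℝ, ∀ e : Fin (q - 1) × Fin (p - 1), Even ((e.1 : ℕ) + e.2) →
      ∑ i : idxSet p q, h i * (x e.1 ^ (i : ℕ × ℕ).1 * y e.2 ^ (i : ℕ × ℕ).2) = w e := by
  classical
  let E := {e : Fin (q - 1) × Fin (p - 1) // Even ((e.1 : ℕ) + e.2)}
  let B : Polynomial ℝ →ₗ[ℝ] Polynomial ℝ →ₗ[ℝ] (E → ℝ) :=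
    LinearMap.mk₂ ℝ (fun P Q e => P.eval (x e.1.1) * Q.eval (y e.1.2))
      (fun _ _ _ => funext fun _ => by simp [add_mul])
      (fun _ _ _ => funext fun _ => by simp [mul_assoc])
      (fun _ _ _ => funext fun _ => by simp [mul_add])
      (fun _ _ _ => funext fun _ => by simp [mul_left_comm])
  let mono : idxSet p q → E → ℝ :=
    fun i e => x e.1.1 ^ (i : ℕ × ℕ).1 * y e.1.2 ^ (i : ℕ × ℕ).2
  let V : Submodule ℝ (E → ℝ) := Submodule.span ℝ (Set.range mono)
  have hlow : ∀ (i j : ℕ), i * p + j * q < p * q → B (u i) (v j) ∈ V := by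
    intro i j hij
    have : B (u i) (v j) = ∑ s ∈ Finset.range (i + 1), ∑ t ∈ Finset.range (j + 1),
        ((u i).coeff s * (v j).coeff t) • (fun e : E => x e.1.1 ^ s * y e.1.2 ^ t) := by
      funext e
      simp only [B, LinearMap.mk₂_apply, Polynomial.eval_eq_sum_range, u.natDegree_eq,
        v.natDegree_eq, Finset.sum_mul_sum, Finset.sum_apply, Pi.smul_apply, smul_eq_mul]
      exact Finset.sum_congr rfl fun s _ => Finset.sum_congr rfl fun t _ => by ring
    rw [this]
    refine Submodule.sum_mem _ fun s hs => Submodule.sum_mem _ fun t ht => V.smul_mem _ ?_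
    have hs' : s ≤ i := Nat.lt_succ_iff.1 (Finset.mem_range.1 hs)
    have ht' : t ≤ j := Nat.lt_succ_iff.1 (Finset.mem_range.1 ht)
    have hst : s * p + t * q < p * q := by
      have := Nat.mul_le_mul_right p hs'
      have := Nat.mul_le_mul_right q ht'
      omega
    have hsq : s < q := by nlinarith
    have htp : t < p := by nlinarith
    exact Submodule.subset_span ⟨⟨(s, t), by simp [idxSet, hsq, htp, hst]⟩, rfl⟩
  have huv : ∀ i j : ℕ, i < q - 1 → j < p - 1 → B (u i) (v j) ∈ V := by
    intro i j hi hj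
    rcases lt_trichotomy ((i + 1) * p + (j + 1) * q) (p * q) with h | h | h
    · exact hlow i j (by nlinarith)
    · exfalso
      have hd : q ∣ (i + 1) * p := by
        have h1 : q ∣ (i + 1) * p + (j + 1) * q := h ▸ Dvd.intro_left p rfl
        exact (Nat.dvd_add_left (Dvd.intro_left _ rfl)).1 h1
      have := Nat.le_of_dvd (Nat.succ_pos i) (hco.symm.dvd_of_dvd_mul_right hd)
      omega
    · obtain ⟨i', hi'⟩ : ∃ i', i + i' + 2 = q := ⟨q - 2 - i, by omega⟩
      obtain ⟨j', hj'⟩ : ∃ j', j + j' + 2 = p := ⟨p - 2 - j, by omega⟩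
      have : B (u i) (v j) = B (u i') (v j') := by
        funext e
        simp only [B, LinearMap.mk₂_apply, hu i i' hi', hv j j' hj']
        have := e.2.neg_one_pow (α := ℝ)
        rw [pow_add] at this
        linear_combination (u i').eval (x e.1.1) * (v j').eval (y e.1.2) * this
      rw [this]
      apply hlow
      subst hi' hj'
      nlinarith
  have hunit : ∀ (s : Polynomial.Sequence ℝ) (i : ℕ), IsUnit (s i).leadingCoeff := fun s i =>
    (Polynomial.leadingCoeff_ne_zero.2 (s.ne_zero i)).isUnit
  have hB : ∀ P ∈ Polynomial.degreeLT ℝ (q - 1), ∀ Q ∈ Polynomial.degreeLT ℝ (p - 1),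
      B P Q ∈ V := by
    rw [← u.span_degreeLT fun i _ => hunit u i, ← v.span_degreeLT fun i _ => hunit v i]
    intro P hP Q hQ
    have h1 : ∀ j < p - 1, B P (v j) ∈ V := fun j hj => by
      have : Submodule.span ℝ (u '' Set.Iio (q - 1)) ≤ V.comap (B.flip (v j)) := by
        rw [Submodule.span_le]
        rintro _ ⟨i, hi, rfl⟩
        exact huv i j hi hj
      exact this hP
    have : Submodule.span ℝ (v '' Set.Iio (p - 1)) ≤ V.comap (B P) := by
      rw [Submodule.span_le]
      rintro _ ⟨j, hj, rfl⟩
      exact h1 j hj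
    exact this hQ
  have hlag : ∀ {n : ℕ} {z : Fin n → ℝ} (_ : Function.Injective z) (k : Fin n),
      Lagrange.basis Finset.univ z k ∈ Polynomial.degreeLT ℝ n := by
    intro n z hz k
    rw [Polynomial.mem_degreeLT, Lagrange.degree_basis hz.injOn (Finset.mem_univ k)]
    have := k.pos
    simp only [Finset.card_univ, Fintype.card_fin]
    exact_mod_cast (by omega : n - 1 < n)
  have hw : (fun e : E => w e.1) ∈ V := by
    have : (fun e : E => w e.1) = ∑ e : E, w e.1 •
        B (Lagrange.basis Finset.univ x e.1.1) (Lagrange.basis Finset.univ y e.1.2) := by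
      funext e
      rw [Finset.sum_apply, Finset.sum_eq_single e]
      · simp [B, Lagrange.eval_basis_self hx.injOn, Lagrange.eval_basis_self hy.injOn]
      · intro e' _ hne
        simp only [B, LinearMap.mk₂_apply, Pi.smul_apply]
        by_cases h1 : e'.1.1 = e.1.1
        · have h2 : e'.1.2 ≠ e.1.2 := fun h2 => hne (Subtype.ext (Prod.ext h1 h2))
          rw [Lagrange.eval_basis_of_ne h2 (Finset.mem_univ _), mul_zero, smul_zero]
        · rw [Lagrange.eval_basis_of_ne h1 (Finset.mem_univ _), zero_mul, smul_zero]
      · simp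
    rw [this]
    exact Submodule.sum_mem _ fun e _ => V.smul_mem _ (hB _ (hlag hx _) _ (hlag hy _))
  obtain ⟨h, hh⟩ := (Submodule.mem_span_range_iff_exists_fun ℝ).1 hw
  refine ⟨h, fun e he => ?_⟩
  simpa [mono] using congrFun hh ⟨e, he⟩

theorem pderiv_zero_pderiv_one_comm {R : Type} [CommRing R] (G : MvPolynomial (Fin 2) R) :
    pderiv 1 (pderiv 0 G) = pderiv 0 (pderiv 1 G) := by
  have h : ⁅pderiv (R := R) (1 : Fin 2), pderiv (R := R) (0 : Fin 2)⁆ = 0 := by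
    refine derivation_ext fun i => ?_
    fin_cases i <;> simp [Derivation.commutator_apply, pderiv_X]
  have := DFunLike.congr_fun h G
  rwa [Derivation.commutator_apply, Derivation.zero_apply, sub_eq_zero] at this

theorem wPoly_add_smul {R : Type} [CommRing R] {p q : ℕ} (a h : idxSet p q → R) (t : R) :
    wPoly R p q (a + t • h) = wPoly R p q a +
      t • ∑ i : idxSet p q, h i • (X 0 ^ (i : ℕ × ℕ).1 * X 1 ^ (i : ℕ × ℕ).2) := by
  simp only [wPoly, Pi.add_apply, Pi.smul_apply, smul_eq_mul, map_add, map_mul, add_mul,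
    Finset.sum_add_distrib, Finset.smul_sum, smul_eq_C_mul]
  rw [add_assoc]
  congr 2
  exact Finset.sum_congr rfl fun i _ => by ring

theorem contDiff_eval_pair (G : MvPolynomial (Fin 2) ℝ) :
    ContDiff ℝ 1 fun P : ℝ × ℝ => eval ![P.1, P.2] G := by
  induction G using MvPolynomial.induction_on with
  | C r => simpa using contDiff_const
  | add G H hG hH => simpa using hG.add hH
  | mul_X G i hG =>
    simp only [map_mul, eval_X]
    refine hG.mul ?_
    fin_cases i
    · exact contDiff_fst
    · exact contDiff_snd

theorem contDiff_eval_wPoly {p q : ℕ} {ι : Type} [Fintype ι]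
    (D : MvPolynomial (Fin 2) ℝ →ₗ[ℝ] MvPolynomial (Fin 2) ℝ) (j : ι) :
    ContDiff ℝ 1 fun z : (idxSet p q → ℝ) × (ι → ℝ × ℝ) =>
      eval ![(z.2 j).1, (z.2 j).2] (D (wPoly ℝ p q z.1)) := by
  have h : ∀ z : (idxSet p q → ℝ) × (ι → ℝ × ℝ),
      eval ![(z.2 j).1, (z.2 j).2] (D (wPoly ℝ p q z.1)) =
        eval ![(z.2 j).1, (z.2 j).2] (D (wPoly ℝ p q 0)) + ∑ i : idxSet p q, z.1 i *
          eval ![(z.2 j).1, (z.2 j).2] (D (X 0 ^ (i : ℕ × ℕ).1 * X 1 ^ (i : ℕ × ℕ).2)) := by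
    intro z
    have := wPoly_add_smul (p := p) (q := q) 0 z.1 (1 : ℝ)
    rw [one_smul, one_smul, zero_add] at this
    rw [this]
    simp [smul_eval]
  simp only [h]
  have hj : ContDiff ℝ 1 fun z : (idxSet p q → ℝ) × (ι → ℝ × ℝ) => z.2 j := by fun_prop
  refine ((contDiff_eval_pair _).comp hj).add (ContDiff.sum fun i _ => ?_)
  have hi : ContDiff ℝ 1 fun z : (idxSet p q → ℝ) × (ι → ℝ × ℝ) => z.1 i := by fun_prop
  exact hi.mul ((contDiff_eval_pair _).comp hj)

theorem continuous_eval_hessPoly_wPoly {p q : ℕ} {ι : Type} [Fintype ι] (j : ι) :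
    Continuous fun z : (idxSet p q → ℝ) × (ι → ℝ × ℝ) =>
      eval ![(z.2 j).1, (z.2 j).2] (hessPoly ℝ (wPoly ℝ p q z.1)) := by
  have h : ∀ k m : Fin 2, Continuous fun z : (idxSet p q → ℝ) × (ι → ℝ × ℝ) =>
      eval ![(z.2 j).1, (z.2 j).2] (pderiv k (pderiv m (wPoly ℝ p q z.1))) := fun k m =>
    (contDiff_eval_wPoly ((pderiv k).toLinearMap ∘ₗ (pderiv m).toLinearMap) j).continuous
  have hfun : (fun z : (idxSet p q → ℝ) × (ι → ℝ × ℝ) =>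
      eval ![(z.2 j).1, (z.2 j).2] (hessPoly ℝ (wPoly ℝ p q z.1))) = fun z =>
        eval ![(z.2 j).1, (z.2 j).2] (pderiv 0 (pderiv 0 (wPoly ℝ p q z.1))) *
          eval ![(z.2 j).1, (z.2 j).2] (pderiv 1 (pderiv 1 (wPoly ℝ p q z.1))) -
        eval ![(z.2 j).1, (z.2 j).2] (pderiv 0 (pderiv 1 (wPoly ℝ p q z.1))) ^ 2 := by
    funext z
    rw [hessPoly, map_sub, map_mul, map_pow]
  rw [hfun]
  exact ((h 0 0).mul (h 1 1)).sub ((h 0 1).pow 2)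

theorem hasDerivAt_eval_pair (G : MvPolynomial (Fin 2) ℝ) (P v : ℝ × ℝ) :
    HasDerivAt (fun t : ℝ => eval ![P.1 + t * v.1, P.2 + t * v.2] G)
      (eval ![P.1, P.2] (pderiv 0 G) * v.1 + eval ![P.1, P.2] (pderiv 1 G) * v.2) 0 := by
  induction G using MvPolynomial.induction_on with
  | C r => simpa using hasDerivAt_const (0 : ℝ) r
  | add G H hG hH =>
    simp only [map_add]
    exact (hG.add hH).congr_deriv (by ring)
  | mul_X G i hG =>
    simp only [map_mul, eval_X]
    have hl : ∀ a b : ℝ, HasDerivAt (fun t : ℝ => a + t * b) b 0 := fun a b => by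
      simpa using ((hasDerivAt_id (0 : ℝ)).mul_const b).const_add a
    fin_cases i
    · refine (hG.mul (hl P.1 v.1)).congr_deriv ?_
      simp [pderiv_X]
      ring
    · refine (hG.mul (hl P.2 v.2)).congr_deriv ?_
      simp [pderiv_X]
      ring

theorem hasDerivAt_eval_wPoly {p q : ℕ}
    (D : MvPolynomial (Fin 2) ℝ →ₗ[ℝ] MvPolynomial (Fin 2) ℝ)
    (a h : idxSet p q → ℝ) (P v : ℝ × ℝ) :
    HasDerivAt (fun t : ℝ =>
        eval ![P.1 + t * v.1, P.2 + t * v.2] (D (wPoly ℝ p q (a + t • h))))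
      (eval ![P.1, P.2] (pderiv 0 (D (wPoly ℝ p q a))) * v.1 +
        eval ![P.1, P.2] (pderiv 1 (D (wPoly ℝ p q a))) * v.2 +
        eval ![P.1, P.2] (D (∑ i : idxSet p q,
          h i • (X 0 ^ (i : ℕ × ℕ).1 * X 1 ^ (i : ℕ × ℕ).2)))) 0 := by
  simp only [wPoly_add_smul, map_add D, map_smul D, map_add (eval _), smul_eval]
  refine (hasDerivAt_eval_pair _ P v).add ?_
  refine ((hasDerivAt_id (0 : ℝ)).mul (hasDerivAt_eval_pair _ P v)).congr_deriv ?_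
  simp

/-- The gradients of `wPoly` at a family of points, and its values at some of them. -/
noncomputable def gradValueMap (p q : ℕ) {ι : Type} (N : ι → Prop)
    (z : (idxSet p q → ℝ) × (ι → ℝ × ℝ)) : (ι → ℝ × ℝ) × ({i // N i} → ℝ) :=
  (fun i => (eval ![(z.2 i).1, (z.2 i).2] (pderiv 0 (wPoly ℝ p q z.1)),
    eval ![(z.2 i).1, (z.2 i).2] (pderiv 1 (wPoly ℝ p q z.1))),
   fun j => eval ![(z.2 j.1).1, (z.2 j.1).2] (wPoly ℝ p q z.1))

theorem contDiff_gradValueMap (p q : ℕ) {ι : Type} [Fintype ι] (N : ι → Prop) [DecidablePred N] :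
    ContDiff ℝ 1 (gradValueMap p q N) :=
  (contDiff_pi.2 fun i => (contDiff_eval_wPoly (pderiv 0).toLinearMap i).prodMk
    (contDiff_eval_wPoly (pderiv 1).toLinearMap i)).prodMk
      (contDiff_pi.2 fun j => contDiff_eval_wPoly LinearMap.id j.1)

theorem hasDerivAt_gradValueMap {p q : ℕ} {ι : Type} [Fintype ι] (N : ι → Prop) [DecidablePred N]
    (a h : idxSet p q → ℝ) (P v : ι → ℝ × ℝ) (F H : MvPolynomial (Fin 2) ℝ)
    (hF : F = wPoly ℝ p q a)
    (hH : H = ∑ i : idxSet p q, h i • (X 0 ^ (i : ℕ × ℕ).1 * X 1 ^ (i : ℕ × ℕ).2)) :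
    HasDerivAt (fun t : ℝ => gradValueMap p q N ((a, P) + t • (h, v)))
      (fun i => (eval ![(P i).1, (P i).2] (pderiv 0 (pderiv 0 F)) * (v i).1 +
          eval ![(P i).1, (P i).2] (pderiv 1 (pderiv 0 F)) * (v i).2 +
          eval ![(P i).1, (P i).2] (pderiv 0 H),
        eval ![(P i).1, (P i).2] (pderiv 0 (pderiv 1 F)) * (v i).1 +
          eval ![(P i).1, (P i).2] (pderiv 1 (pderiv 1 F)) * (v i).2 +
          eval ![(P i).1, (P i).2] (pderiv 1 H)),
       fun j => eval ![(P j.1).1, (P j.1).2] (pderiv 0 F) * (v j.1).1 +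
          eval ![(P j.1).1, (P j.1).2] (pderiv 1 F) * (v j.1).2 +
          eval ![(P j.1).1, (P j.1).2] H) 0 := by
  subst hF hH
  exact (hasDerivAt_pi.2 fun i =>
    (hasDerivAt_eval_wPoly (pderiv 0).toLinearMap a h (P i) (v i)).prodMk
      (hasDerivAt_eval_wPoly (pderiv 1).toLinearMap a h (P i) (v i))).prodMk
    (hasDerivAt_pi.2 fun j => hasDerivAt_eval_wPoly LinearMap.id a h (P j.1) (v j.1))

theorem fderiv_gradValueMap_range {p q : ℕ} {ι : Type} [Fintype ι] (N : ι → Prop)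
    [DecidablePred N] (a : idxSet p q → ℝ) (P : ι → ℝ × ℝ)
    (h0 : ∀ i, eval ![(P i).1, (P i).2] (pderiv 0 (wPoly ℝ p q a)) = 0)
    (h1 : ∀ i, eval ![(P i).1, (P i).2] (pderiv 1 (wPoly ℝ p q a)) = 0)
    (hhess : ∀ i, eval ![(P i).1, (P i).2] (hessPoly ℝ (wPoly ℝ p q a)) ≠ 0)
    (hinterp : ∀ w : ι → ℝ, ∃ h : idxSet p q → ℝ, ∀ i, N i →
      ∑ s : idxSet p q, h s * ((P i).1 ^ (s : ℕ × ℕ).1 * (P i).2 ^ (s : ℕ × ℕ).2) = w i) :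
    (fderiv ℝ (gradValueMap p q N) (a, P)).range = ⊤ := by
  refine LinearMap.range_eq_top.2 fun c => ?_
  obtain ⟨h, hh⟩ := hinterp fun i => if hi : N i then c.2 ⟨i, hi⟩ else 0
  obtain ⟨H, hH⟩ : ∃ H : MvPolynomial (Fin 2) ℝ, H = ∑ s : idxSet p q,
    h s • (X 0 ^ (s : ℕ × ℕ).1 * X 1 ^ (s : ℕ × ℕ).2) := ⟨_, rfl⟩
  obtain ⟨F, hF⟩ : ∃ F, F = wPoly ℝ p q a := ⟨_, rfl⟩
  rw [← hF] at h0 h1 hhess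
  have hsolve : ∀ i, ∃ v : ℝ × ℝ,
      eval ![(P i).1, (P i).2] (pderiv 0 (pderiv 0 F)) * v.1 +
        eval ![(P i).1, (P i).2] (pderiv 1 (pderiv 0 F)) * v.2 +
        eval ![(P i).1, (P i).2] (pderiv 0 H) = (c.1 i).1 ∧
      eval ![(P i).1, (P i).2] (pderiv 0 (pderiv 1 F)) * v.1 +
        eval ![(P i).1, (P i).2] (pderiv 1 (pderiv 1 F)) * v.2 +
        eval ![(P i).1, (P i).2] (pderiv 1 H) = (c.1 i).2 := by
    intro i
    have hne := hhess i
    rw [hessPoly, map_sub, map_mul, map_pow] at hne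
    rw [pderiv_zero_pderiv_one_comm]
    generalize eval ![(P i).1, (P i).2] (pderiv 0 (pderiv 0 F)) = A at *
    generalize eval ![(P i).1, (P i).2] (pderiv 0 (pderiv 1 F)) = B at *
    generalize eval ![(P i).1, (P i).2] (pderiv 1 (pderiv 1 F)) = D at *
    generalize eval ![(P i).1, (P i).2] (pderiv 0 H) = r at *
    generalize eval ![(P i).1, (P i).2] (pderiv 1 H) = s at *
    obtain ⟨d, hd⟩ : ∃ d, d * (A * D - B ^ 2) = 1 := ⟨_, inv_mul_cancel₀ hne⟩
    refine ⟨((((c.1 i).1 - r) * D - ((c.1 i).2 - s) * B) * d,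
      (((c.1 i).2 - s) * A - ((c.1 i).1 - r) * B) * d), ?_, ?_⟩
    · linear_combination ((c.1 i).1 - r) * hd
    · linear_combination ((c.1 i).2 - s) * hd
  choose v hv0 hv1 using hsolve
  refine ⟨(h, v), ?_⟩
  have hline : HasDerivAt (fun t : ℝ => (a, P) + t • (h, v)) (h, v) 0 :=
    (((hasDerivAt_id (0 : ℝ)).smul_const (h, v)).const_add (a, P)).congr_deriv (one_smul _ _)
  have hcomp : HasDerivAt (fun t : ℝ => gradValueMap p q N ((a, P) + t • (h, v)))
      (fderiv ℝ (gradValueMap p q N) (a, P) (h, v)) 0 := by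
    have hd : HasFDerivAt (gradValueMap p q N) (fderiv ℝ (gradValueMap p q N) (a, P))
        ((a, P) + (0 : ℝ) • (h, v)) := by
      rw [zero_smul, add_zero]
      exact ((contDiff_gradValueMap p q N).differentiable one_ne_zero _).hasFDerivAt
    exact hd.comp_hasDerivAt 0 hline
  refine (hcomp.unique (hasDerivAt_gradValueMap N a h P v F H hF hH)).trans ?_
  refine Prod.ext (funext fun i => Prod.ext (hv0 i) (hv1 i)) (funext fun j => ?_)
  have := hh j.1 j.2
  rw [dif_pos j.2] at this
  change eval ![(P j.1).1, (P j.1).2] (pderiv 0 F) * (v j.1).1 +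
    eval ![(P j.1).1, (P j.1).2] (pderiv 1 F) * (v j.1).2 +
    eval ![(P j.1).1, (P j.1).2] H = c.2 j
  rw [← this, h0, h1, hH]
  simp [smul_eval]

/-- If the zero critical values of a Weierstraß polynomial can be moved independently to first
order, then any prescribed set of its nodes can be kept while the other ones are smoothed. -/
theorem exists_partial_smoothing {p q : ℕ} {ι : Type} [Fintype ι] (a₀ : idxSet p q → ℝ)
    (P₀ : ι → ℝ × ℝ) (hinj : Function.Injective P₀)
    (h0 : ∀ i, eval ![(P₀ i).1, (P₀ i).2] (pderiv 0 (wPoly ℝ p q a₀)) = 0)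
    (h1 : ∀ i, eval ![(P₀ i).1, (P₀ i).2] (pderiv 1 (wPoly ℝ p q a₀)) = 0)
    (hhess : ∀ i, eval ![(P₀ i).1, (P₀ i).2] (hessPoly ℝ (wPoly ℝ p q a₀)) ≠ 0)
    (hinterp : ∀ w : ι → ℝ, ∃ h : idxSet p q → ℝ, ∀ i,
      eval ![(P₀ i).1, (P₀ i).2] (wPoly ℝ p q a₀) = 0 →
        ∑ s : idxSet p q, h s * ((P₀ i).1 ^ (s : ℕ × ℕ).1 * (P₀ i).2 ^ (s : ℕ × ℕ).2) = w i)
    (S : Finset ι) (hS : ∀ i ∈ S, eval ![(P₀ i).1, (P₀ i).2] (wPoly ℝ p q a₀) = 0) :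
    ∃ (a : idxSet p q → ℝ) (Q : ι → ℝ × ℝ), Function.Injective Q ∧
      (∀ i, eval ![(Q i).1, (Q i).2] (pderiv 0 (wPoly ℝ p q a)) = 0) ∧
      (∀ i, eval ![(Q i).1, (Q i).2] (pderiv 1 (wPoly ℝ p q a)) = 0) ∧
      (∀ i, eval ![(Q i).1, (Q i).2] (hessPoly ℝ (wPoly ℝ p q a)) ≠ 0) ∧
      ∀ i, eval ![(Q i).1, (Q i).2] (wPoly ℝ p q a) = 0 ↔ i ∈ S := by
  classical
  open Filter Topology in
  let N : ι → Prop := fun i => eval ![(P₀ i).1, (P₀ i).2] (wPoly ℝ p q a₀) = 0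
  have hstrict : HasStrictFDerivAt (gradValueMap p q N) _ (a₀, P₀) :=
    (contDiff_gradValueMap p q N).contDiffAt.hasStrictFDerivAt one_ne_zero
  have hmap := hstrict.map_nhds_eq_of_surj
    (fderiv_gradValueMap_range N a₀ P₀ h0 h1 hhess hinterp)
  have hgood_inj : ∀ᶠ z : (idxSet p q → ℝ) × (ι → ℝ × ℝ) in 𝓝 (a₀, P₀),
      ∀ i j, i ≠ j → z.2 i ≠ z.2 j := by
    refine eventually_all.2 fun i => eventually_all.2 fun j => ?_
    by_cases hij : i = j
    · simp [hij]
    · have hc : Continuous fun z : (idxSet p q → ℝ) × (ι → ℝ × ℝ) => z.2 i - z.2 j := by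
        fun_prop
      have h2 := hc.continuousAt.eventually_ne (x := (a₀, P₀)) (y := 0)
        (sub_ne_zero.2 fun h => hij (hinj h))
      exact h2.mono fun z hz _ h => hz (sub_eq_zero.2 h)
  have hgood_hess : ∀ᶠ z : (idxSet p q → ℝ) × (ι → ℝ × ℝ) in 𝓝 (a₀, P₀),
      ∀ i, eval ![(z.2 i).1, (z.2 i).2] (hessPoly ℝ (wPoly ℝ p q z.1)) ≠ 0 := by
    refine eventually_all.2 fun i => ?_
    exact (continuous_eval_hessPoly_wPoly i).continuousAt.eventually_ne (hhess i)
  have hgood_val : ∀ᶠ z : (idxSet p q → ℝ) × (ι → ℝ × ℝ) in 𝓝 (a₀, P₀),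
      ∀ i, ¬ N i → eval ![(z.2 i).1, (z.2 i).2] (wPoly ℝ p q z.1) ≠ 0 := by
    refine eventually_all.2 fun i => ?_
    by_cases hi : N i
    · exact Eventually.of_forall fun z hz => absurd hi hz
    · have hc : Continuous fun z : (idxSet p q → ℝ) × (ι → ℝ × ℝ) =>
          eval ![(z.2 i).1, (z.2 i).2] (wPoly ℝ p q z.1) :=
        (contDiff_eval_wPoly LinearMap.id i).continuous
      have hne : ∀ᶠ z : (idxSet p q → ℝ) × (ι → ℝ × ℝ) in 𝓝 (a₀, P₀),
          eval ![(z.2 i).1, (z.2 i).2] (wPoly ℝ p q z.1) ≠ 0 :=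
        hc.continuousAt.eventually_ne hi
      exact hne.mono fun z hz _ => hz
  have himage := image_mem_map (m := gradValueMap p q N)
    (hgood_inj.and (hgood_hess.and hgood_val))
  rw [hmap] at himage
  let γ : ℝ → (ι → ℝ × ℝ) × ({i // N i} → ℝ) := fun ε => (0, fun j => if j.1 ∈ S then 0 else ε)
  have hγ : Tendsto γ (𝓝[≠] 0) (𝓝 (gradValueMap p q N (a₀, P₀))) := by
    have hγ0 : γ 0 = gradValueMap p q N (a₀, P₀) := by
      refine Prod.ext (funext fun i => Prod.ext (h0 i).symm (h1 i).symm) (funext fun j => ?_)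
      simp only [γ, ite_self]
      exact j.2.symm
    rw [← hγ0]
    have hc : Continuous γ := by
      refine continuous_const.prodMk (continuous_pi fun j => ?_)
      by_cases hj : j.1 ∈ S
      · simpa [hj] using continuous_const
      · simpa [hj] using continuous_id'
    exact hc.continuousAt.tendsto.mono_left nhdsWithin_le_nhds
  obtain ⟨ε, ⟨z, ⟨hz1, hz2, hz3⟩, hz⟩, hε⟩ :=
    ((hγ.eventually himage).and self_mem_nhdsWithin).exists
  have hz4 := congrArg Prod.fst hz
  refine ⟨z.1, z.2, fun i j hij => by_contra fun hne => hz1 i j hne hij,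
    fun i => congrArg Prod.fst (congrFun hz4 i), fun i => congrArg Prod.snd (congrFun hz4 i),
    hz2, fun i => ?_⟩
  by_cases hi : N i
  · have h5 : eval ![(z.2 i).1, (z.2 i).2] (wPoly ℝ p q z.1) = if i ∈ S then 0 else ε :=
      congrFun (congrArg Prod.snd hz) ⟨i, hi⟩
    rw [h5]
    by_cases hiS : i ∈ S
    · simp [hiS]
    · simpa [hiS] using hε
  · exact iff_of_false (hz3 i hi) fun hiS => hi (hS i hiS)

/-- Coefficients of the Weierstraß polynomial `f(Y) - g(X)`. -/
noncomputable def separatedCoeff (p q : ℕ) (f g : Polynomial ℝ) (i : idxSet p q) : ℝ :=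
  (if (i : ℕ × ℕ).1 = 0 then f.coeff (i : ℕ × ℕ).2 else 0) -
    if (i : ℕ × ℕ).2 = 0 then g.coeff (i : ℕ × ℕ).1 else 0

theorem wPoly_separatedCoeff {p q : ℕ} (hp : 0 < p) (hq : 0 < q) {f g : Polynomial ℝ}
    (hf : f.Monic) (hg : g.Monic) (hfp : f.natDegree = p) (hgq : g.natDegree = q) :
    wPoly ℝ p q (separatedCoeff p q f g) = Polynomial.aeval (X 1) f - Polynomial.aeval (X 0) g := by
  have hy : ∑ i ∈ idxSet p q, (if i.1 = 0 then C (f.coeff i.2) * X 1 ^ i.2 else 0) =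
      ∑ μ ∈ Finset.range p, C (f.coeff μ) * (X 1 : MvPolynomial (Fin 2) ℝ) ^ μ := by
    rw [← Finset.sum_filter]
    refine Finset.sum_nbij' (fun i => i.2) (fun μ => (0, μ)) ?_ ?_ ?_ ?_ ?_
    · intro i hi
      simp only [idxSet, Finset.mem_filter, Finset.mem_product] at hi
      exact hi.1.1.2
    · intro μ hμ
      have := Finset.mem_range.1 hμ
      simp only [idxSet, Finset.mem_filter, Finset.mem_product, Finset.mem_range]
      exact ⟨⟨⟨hq, this⟩, by simpa using Nat.mul_lt_mul_of_pos_right this hq⟩, trivial⟩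
    · intro i hi
      exact Prod.ext (Finset.mem_filter.1 hi).2.symm rfl
    · intro μ _
      rfl
    · intro i _
      rfl
  have hx : ∑ i ∈ idxSet p q, (if i.2 = 0 then C (g.coeff i.1) * X 0 ^ i.1 else 0) =
      ∑ ν ∈ Finset.range q, C (g.coeff ν) * (X 0 : MvPolynomial (Fin 2) ℝ) ^ ν := by
    rw [← Finset.sum_filter]
    refine Finset.sum_nbij' (fun i => i.1) (fun ν => (ν, 0)) ?_ ?_ ?_ ?_ ?_
    · intro i hi
      simp only [idxSet, Finset.mem_filter, Finset.mem_product] at hi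
      exact hi.1.1.1
    · intro ν hν
      have := Finset.mem_range.1 hν
      simp only [idxSet, Finset.mem_filter, Finset.mem_product, Finset.mem_range]
      exact ⟨⟨⟨this, hp⟩, by simpa [mul_comm p q] using Nat.mul_lt_mul_of_pos_right this hp⟩, trivial⟩
    · intro i hi
      exact Prod.ext rfl (Finset.mem_filter.1 hi).2.symm
    · intro ν _
      rfl
    · intro i _
      rfl
  let c : ℕ × ℕ → MvPolynomial (Fin 2) ℝ := fun i =>
    (if i.1 = 0 then C (f.coeff i.2) * X 1 ^ i.2 else 0) -
      if i.2 = 0 then C (g.coeff i.1) * X 0 ^ i.1 else 0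
  have hterm : ∀ i : idxSet p q, C (separatedCoeff p q f g i) * X 0 ^ (i : ℕ × ℕ).1 *
      X 1 ^ (i : ℕ × ℕ).2 = c i := by
    rintro ⟨⟨ν, μ⟩, hi⟩
    simp only [separatedCoeff, c]
    split_ifs with h1 h2 h2 <;> simp [*]
  have haf : Polynomial.aeval (X 1 : MvPolynomial (Fin 2) ℝ) f =
      X 1 ^ p + ∑ μ ∈ Finset.range p, C (f.coeff μ) * X 1 ^ μ := by
    conv_lhs => rw [hf.as_sum, hfp]
    simp [Polynomial.aeval_C, algebraMap_eq]
  have hag : Polynomial.aeval (X 0 : MvPolynomial (Fin 2) ℝ) g =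
      X 0 ^ q + ∑ ν ∈ Finset.range q, C (g.coeff ν) * X 0 ^ ν := by
    conv_lhs => rw [hg.as_sum, hgq]
    simp [Polynomial.aeval_C, algebraMap_eq]
  rw [wPoly, (Finset.sum_congr rfl fun i _ => hterm i).trans
    (Finset.sum_coe_sort (idxSet p q) c), Finset.sum_sub_distrib, hx, hy, haf, hag]
  ring

theorem eval_aeval_X {σ R : Type} [CommRing R] (v : σ → R) (j : σ) (f : Polynomial R) :
    eval v (Polynomial.aeval (X j : MvPolynomial σ R) f) = f.eval (v j) := by
  rw [← MvPolynomial.coe_aeval_eq_eval, RingHom.coe_coe, ← Polynomial.aeval_algHom_apply]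
  simp [Polynomial.coe_aeval_eq_eval]

theorem half_card_le_card_even_add {m n : ℕ} (hmn : Even m ∨ Even n) :
    m * n / 2 ≤ (Finset.univ.filter fun e : Fin m × Fin n => Even ((e.1 : ℕ) + e.2)).card := by
  have hcard : (Finset.univ.filter fun e : Fin m × Fin n => ¬ Even ((e.1 : ℕ) + e.2)).card ≤
      (Finset.univ.filter fun e : Fin m × Fin n => Even ((e.1 : ℕ) + e.2)).card := by
    rcases hmn with h | h
    · refine Finset.card_le_card_of_injOn (fun e => (e.1.rev, e.2)) ?_ ?_
      · rintro ⟨k, j⟩ he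
        have hk := k.2
        simp only [Finset.coe_filter, Finset.mem_univ, true_and, Set.mem_ofPred_eq,
          Fin.val_rev] at he ⊢
        grind
      · rintro ⟨k, j⟩ _ ⟨k', j'⟩ _ h
        simpa using h
    · refine Finset.card_le_card_of_injOn (fun e => (e.1, e.2.rev)) ?_ ?_
      · rintro ⟨k, j⟩ he
        have hk := j.2
        simp only [Finset.coe_filter, Finset.mem_univ, true_and, Set.mem_ofPred_eq,
          Fin.val_rev] at he ⊢
        grind
      · rintro ⟨k, j⟩ _ ⟨k', j'⟩ _ h
        simpa using h
  have htot := Finset.card_filter_add_card_filter_not (s := Finset.univ)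
    (fun e : Fin m × Fin n => Even ((e.1 : ℕ) + e.2))
  rw [Finset.card_univ, Fintype.card_prod, Fintype.card_fin, Fintype.card_fin] at htot
  omega

/-- A finite set of real numbers is contained in a subring mapping to any algebraically closed
field of characteristic zero in such a way that no nonzero element of the set is killed. -/
theorem exists_subalgebra_ringHom (K : Type) [Field K] [IsAlgClosed K] [CharZero K] {V : Set ℝ}
    (hV : V.Finite) :
    ∃ (A : Subalgebra ℚ ℝ) (φ : A →+* K), V ⊆ A ∧ ∀ x : A, (x : ℝ) ∈ V → x ≠ 0 → φ x ≠ 0 := by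
  let A := Algebra.adjoin ℚ (V ∪ Inv.inv '' V)
  have hfin : Algebra.FiniteType ℚ A := (Subalgebra.fg_iff_finiteType A).1
    (Subalgebra.fg_def.2 ⟨_, hV.union (hV.image _), rfl⟩)
  obtain ⟨φ⟩ := exists_algHom_of_finiteType_rat A K
  refine ⟨A, φ, fun x hx => Algebra.subset_adjoin (Or.inl hx), fun x hx hne => ?_⟩
  have hx0 : (x : ℝ) ≠ 0 := fun h => hne (Subtype.ext h)
  have hunit : x * ⟨(x : ℝ)⁻¹, Algebra.subset_adjoin (Or.inr ⟨_, hx, rfl⟩)⟩ = 1 :=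
    Subtype.ext (mul_inv_cancel₀ hx0)
  intro h
  have := congrArg φ hunit
  rw [map_mul, show φ x = 0 from h, zero_mul, map_one] at this
  exact zero_ne_one this

/-- A configuration of nondegenerate critical points of a real Weierstraß polynomial can be moved
to any algebraically closed field of characteristic zero, keeping track of which critical values
vanish. -/
theorem exists_transfer {p q : ℕ} {ι : Type} [Finite ι] (K : Type) [Field K] [IsAlgClosed K]
    [CharZero K] {a : idxSet p q → ℝ} {Q : ι → ℝ × ℝ} (hinj : Function.Injective Q)
    (h0 : ∀ i, eval ![(Q i).1, (Q i).2] (pderiv 0 (wPoly ℝ p q a)) = 0)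
    (h1 : ∀ i, eval ![(Q i).1, (Q i).2] (pderiv 1 (wPoly ℝ p q a)) = 0)
    (hhess : ∀ i, eval ![(Q i).1, (Q i).2] (hessPoly ℝ (wPoly ℝ p q a)) ≠ 0) :
    ∃ (b : idxSet p q → K) (R : ι → K × K), Function.Injective R ∧
      (∀ i, eval ![(R i).1, (R i).2] (pderiv 0 (wPoly K p q b)) = 0) ∧
      (∀ i, eval ![(R i).1, (R i).2] (pderiv 1 (wPoly K p q b)) = 0) ∧
      (∀ i, eval ![(R i).1, (R i).2] (hessPoly K (wPoly K p q b)) ≠ 0) ∧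
      ∀ i, eval ![(R i).1, (R i).2] (wPoly K p q b) = 0 ↔
        eval ![(Q i).1, (Q i).2] (wPoly ℝ p q a) = 0 := by
  obtain ⟨V, hV, ha, hx, hy, hH, hF, hdx, hdy⟩ : ∃ V : Set ℝ, V.Finite ∧ (∀ s, a s ∈ V) ∧
      (∀ i, (Q i).1 ∈ V) ∧ (∀ i, (Q i).2 ∈ V) ∧
      (∀ i, eval ![(Q i).1, (Q i).2] (hessPoly ℝ (wPoly ℝ p q a)) ∈ V) ∧
      (∀ i, eval ![(Q i).1, (Q i).2] (wPoly ℝ p q a) ∈ V) ∧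
      (∀ i j, (Q i).1 - (Q j).1 ∈ V) ∧ (∀ i j, (Q i).2 - (Q j).2 ∈ V) :=
    ⟨Set.range a ∪ Set.range (fun i => (Q i).1) ∪ Set.range (fun i => (Q i).2) ∪
      Set.range (fun i => eval ![(Q i).1, (Q i).2] (hessPoly ℝ (wPoly ℝ p q a))) ∪
      Set.range (fun i => eval ![(Q i).1, (Q i).2] (wPoly ℝ p q a)) ∪
      Set.range (fun e : ι × ι => (Q e.1).1 - (Q e.2).1) ∪
      Set.range (fun e : ι × ι => (Q e.1).2 - (Q e.2).2),
      by simp only [Set.finite_union, Set.finite_range, and_self],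
      by simp, by simp, by simp, by simp, by simp,
      fun i j => Or.inl (Or.inr ⟨(i, j), rfl⟩), fun i j => Or.inr ⟨(i, j), rfl⟩⟩
  obtain ⟨A, φ, hVA, hφ⟩ := exists_subalgebra_ringHom K hV
  let ψ : A →+* ℝ := A.subtype
  have hψ : Function.Injective ψ := Subtype.val_injective
  let a' : idxSet p q → A := fun s => ⟨a s, hVA (ha s)⟩
  let x : ι → A := fun i => ⟨(Q i).1, hVA (hx i)⟩
  let y : ι → A := fun i => ⟨(Q i).2, hVA (hy i)⟩
  have hmapψ : map ψ (wPoly A p q a') = wPoly ℝ p q a := map_wPoly ψ a'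
  have hmapφ : map φ (wPoly A p q a') = wPoly K p q fun s => φ (a' s) := map_wPoly φ a'
  have hval : ∀ i (G : MvPolynomial (Fin 2) A),
      ψ (eval ![x i, y i] G) = eval ![(Q i).1, (Q i).2] (map ψ G) :=
    fun i G => (eval_pair_map ψ (x i) (y i) G).symm
  have hzero : ∀ i (G : MvPolynomial (Fin 2) A), eval ![(Q i).1, (Q i).2] (map ψ G) = 0 →
      eval ![φ (x i), φ (y i)] (map φ G) = 0 := by
    intro i G h
    rw [eval_pair_map, hψ ((hval i G).trans (h.trans (map_zero ψ).symm)), map_zero]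
  have hnezero : ∀ i (G : MvPolynomial (Fin 2) A), eval ![(Q i).1, (Q i).2] (map ψ G) ∈ V →
      eval ![(Q i).1, (Q i).2] (map ψ G) ≠ 0 → eval ![φ (x i), φ (y i)] (map φ G) ≠ 0 := by
    intro i G hmem h
    rw [eval_pair_map]
    rw [← hval] at hmem h
    exact hφ _ hmem fun h' => h (by rw [h', map_zero])
  refine ⟨fun s => φ (a' s), fun i => (φ (x i), φ (y i)), fun i j hij => ?_,
    fun i => ?_, fun i => ?_, fun i => ?_, fun i => ?_⟩
  · have hsub : ∀ s t : A, (s : ℝ) - t ∈ V → φ s = φ t → (s : ℝ) = t := by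
      intro s t hmem h
      by_contra hne
      refine hφ (s - t) hmem (fun h' => hne (congrArg Subtype.val (sub_eq_zero.1 h'))) ?_
      rw [map_sub, h, sub_self]
    exact hinj (Prod.ext (hsub _ _ (hdx i j) (congrArg Prod.fst hij))
      (hsub _ _ (hdy i j) (congrArg Prod.snd hij)))
  · rw [← hmapφ, pderiv_map]
    exact hzero i _ (by rw [← pderiv_map, hmapψ, h0])
  · rw [← hmapφ, pderiv_map]
    exact hzero i _ (by rw [← pderiv_map, hmapψ, h1])
  · rw [← hmapφ, ← map_hessPoly]
    refine hnezero i _ ?_ ?_ <;> rw [map_hessPoly, hmapψ]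
    exacts [hH i, hhess i]
  · rw [← hmapφ, ← hmapψ]
    refine ⟨fun h => by_contra fun hne => hnezero i _ ?_ hne h, hzero i _⟩
    rw [hmapψ]
    exact hF i

/-- A real Weierstraß polynomial with the maximal number of critical points, all of them
nondegenerate, exactly `l` of which lie on the curve. -/
theorem exists_real_wPoly_critical {p q : ℕ} (hp : 1 < p) (hq : 1 < q) (hco : Nat.Coprime p q)
    {l : ℕ} (hl : l ≤ (p - 1) * (q - 1) / 2) :
    ∃ (a : idxSet p q → ℝ) (Q : Fin (q - 1) × Fin (p - 1) → ℝ × ℝ)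
      (S : Finset (Fin (q - 1) × Fin (p - 1))), S.card = l ∧ Function.Injective Q ∧
      (∀ i, eval ![(Q i).1, (Q i).2] (pderiv 0 (wPoly ℝ p q a)) = 0) ∧
      (∀ i, eval ![(Q i).1, (Q i).2] (pderiv 1 (wPoly ℝ p q a)) = 0) ∧
      (∀ i, eval ![(Q i).1, (Q i).2] (hessPoly ℝ (wPoly ℝ p q a)) ≠ 0) ∧
      ∀ i, eval ![(Q i).1, (Q i).2] (wPoly ℝ p q a) = 0 ↔ i ∈ S := by
  obtain ⟨f, y, v, hfm, hfd, hy, hf1, hf2, hfv, hv⟩ := exists_monic_chebyshev hp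
  obtain ⟨g, x, u, hgm, hgd, hx, hg1, hg2, hgv, hu⟩ := exists_monic_chebyshev hq
  have hW := wPoly_separatedCoeff (by omega) (by omega) hfm hgm hfd hgd
  have heven : Even (q - 1) ∨ Even (p - 1) := by
    by_contra! h
    have h1 : ¬ 2 ∣ Nat.gcd p q := by rw [hco]; norm_num
    exact h1 (Nat.dvd_gcd (by grind) (by grind))
  have hl' := hl.trans_eq (by rw [mul_comm]) |>.trans (half_card_le_card_even_add heven)
  obtain ⟨S, hS, hcard⟩ := Finset.exists_subset_card_eq hl'
  let P : Fin (q - 1) × Fin (p - 1) → ℝ × ℝ := fun e => (x e.1, y e.2)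
  have hval : ∀ e, eval ![(P e).1, (P e).2] (wPoly ℝ p q (separatedCoeff p q f g)) = 0 ↔
      Even ((e.1 : ℕ) + e.2) := by
    intro e
    rw [hW, map_sub, eval_aeval_X, eval_aeval_X]
    simp only [P, Matrix.cons_val_zero, Matrix.cons_val_one, hfv, hgv, Nat.even_add]
    rcases Nat.even_or_odd (e.1 : ℕ) with h | h <;>
      rcases Nat.even_or_odd (e.2 : ℕ) with h' | h' <;>
      rw [h.neg_one_pow, h'.neg_one_pow] <;>
      simp only [h, h', Nat.not_even_iff_odd.2, iff_true, iff_false] <;> norm_num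
  obtain ⟨a, Q, h⟩ := exists_partial_smoothing (separatedCoeff p q f g) P
    (fun e e' h => Prod.ext (hx (congrArg Prod.fst h)) (hy (congrArg Prod.snd h)))
    (fun e => by simp [hW, eval_aeval_X, P, hg1])
    (fun e => by simp [hW, eval_aeval_X, P, hf1])
    (fun e => by simp [hW, hessPoly, eval_aeval_X, P, hf2, hg2])
    (fun w => (exists_interpolation hp hq hco hx hy u v hu hv w).imp
      fun h hh e he => hh e ((hval e).1 he))
    S fun e he => (hval e).2 (Finset.mem_filter.1 (hS he)).2
  exact ⟨a, Q, S, hcard, h⟩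

/-- **Theorem 1.6.** For every `l` with `1 ≤ l ≤ d = (p−1)(q−1)/2` there is a nodal curve of
type `p,q` with exactly `l` nodes: there is a tuple `a ∈ K^I` such that every singular point
of the curve `C_a` is a node, and the set of singular points is finite of cardinality `l`. -/
theorem nodal_curve_with_exactly_l_nodes_exists
    (K : Type) [Field K] [IsAlgClosed K] [CharZero K]
    (p q : ℕ) (hp : 1 < p) (hpq : p < q) (hco : Nat.Coprime p q)
    (l : ℕ) (hl1 : 1 ≤ l) (hl2 : l ≤ (p - 1) * (q - 1) / 2) :
    ∃ a : idxSet p q → K,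
      (∀ P : K × K, IsSingAt K (wPoly K p q a) P → IsNodeAt K (wPoly K p q a) P) ∧
      {P : K × K | IsSingAt K (wPoly K p q a) P}.Finite ∧
      {P : K × K | IsSingAt K (wPoly K p q a) P}.ncard = l := by
  classical
  have hq : 1 < q := hp.trans hpq
  obtain ⟨a, Q, S, hcard, hinj, h0, h1, hhess, hS⟩ := exists_real_wPoly_critical hp hq hco hl2
  obtain ⟨b, R, hR, hR0, hR1, hRhess, hRS⟩ := exists_transfer K hinj h0 h1 hhess
  have hcrit : ∀ P : K × K, eval ![P.1, P.2] (pderiv 0 (wPoly K p q b)) = 0 →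
      eval ![P.1, P.2] (pderiv 1 (wPoly K p q b)) = 0 → ∃ i, R i = P := by
    intro P hP0 hP1
    by_contra! hne
    have hle := card_critical_le hp hq b (insert P (Finset.univ.image R))
      (Finset.forall_mem_insert _ _ _ |>.2 ⟨hP0, Finset.forall_mem_image.2 fun i _ => hR0 i⟩)
      (Finset.forall_mem_insert _ _ _ |>.2 ⟨hP1, Finset.forall_mem_image.2 fun i _ => hR1 i⟩)
    rw [Finset.card_insert_of_notMem (by simpa using fun i j => hne (i, j)),
      Finset.card_image_of_injective _ hR] at hle
    simp at hle
  have hsing : {P : K × K | IsSingAt K (wPoly K p q b) P} = R '' S := by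
    ext P
    constructor
    · rintro ⟨hP, hP0, hP1⟩
      obtain ⟨i, rfl⟩ := hcrit P hP0 hP1
      exact ⟨i, (hS i).1 ((hRS i).1 hP), rfl⟩
    · rintro ⟨i, hi, rfl⟩
      exact ⟨(hRS i).2 ((hS i).2 hi), hR0 i, hR1 i⟩
  refine ⟨b, fun P hP => ⟨hP, ?_⟩, ?_, ?_⟩
  · obtain ⟨i, rfl⟩ := hcrit P hP.2.1 hP.2.2
    exact hRhess i
  · rw [hsing]
    exact S.finite_toSet.image R
  · rw [hsing, Set.ncard_image_of_injective _ hR, Set.ncard_coe_finset, hcard]
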